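/- There exists an absolute constant C > 0 such that for all positive integers M, N, every integer matrix A ∈ ℤ^{M×N} and every b ∈ ℤ^M, with Δ := max_{i,j} |A i j| (assumed ≥ 1), the set of extreme points of the convex hull (in ℝ^N) of { x : Fin N → ℝ | x ≥ 0, A x = b, and every coordinate of x is an integer } is finite and has cardinality at most N^M · ( C · M · (Real.log (M·Δ) + 1) )^N. -/

import Mathlib

/-!
An extreme point of the integer hull is an integral point `x` that is *midpoint free*: no nonzero
integral `g` in the kernel of `A` satisfies `|g| ≤ x`. Cramer's rule, applied to the Gram matrix of
independent columns, shows that dependent columns carry a nonzero integral kernel vector of size at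
most `κ = (MΔ) ^ (2M + 2)`; hence the columns on which `x` is at least `κ` are independent. If `y`
is another midpoint free point of the same fibre and `|x j - y j| ≤ x j` wherever `x j < κ`,
Cramer's rule on the independent columns bounds `x - y` by some `R` on the remaining coordinates.
Here `R` does not involve `N`, because the columns in the support of a midpoint free point are
distinct and there are only `(2Δ + 1) ^ M` possible columns. So if `|x j - y j| ≤ x j` wherever
`x j < R`, this holds for every `j`, and `x = y`. Consequently `x` is determined by the binary
lengths of its coordinates, truncated at about `log R = O(M log (MΔ))`.
-/

open Finset
open scoped Matrix

section OrderedRing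

variable {m n τ R : Type*} [Fintype n] [Fintype τ] [CommRing R] [LinearOrder R]
  [IsStrictOrderedRing R]

theorem abs_dotProduct_le {v w : n → R} {α β : R} {S : Finset n} (hv : ∀ j, |v j| ≤ α)
    (hw : ∀ j, |w j| ≤ β) (hS : ∀ j ∉ S, w j = 0) : |v ⬝ᵥ w| ≤ #S * (α * β) := by
  have dotProduct_eq_sum : v ⬝ᵥ w = ∑ j ∈ S, v j * w j :=
    (sum_subset (subset_univ S) fun j _ hj => by rw [hS j hj, mul_zero]).symm
  calc |v ⬝ᵥ w| ≤ ∑ j ∈ S, |v j * w j| := dotProduct_eq_sum ▸ abs_sum_le_sum_abs _ _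
    _ ≤ ∑ _j ∈ S, α * β := sum_le_sum fun j _ => by
        rw [abs_mul]
        exact mul_le_mul (hv j) (hw j) (abs_nonneg _) ((abs_nonneg _).trans (hv j))
    _ = #S * (α * β) := by rw [sum_const, nsmul_eq_mul]

theorem abs_det_le_card_mul_pow [DecidableEq τ] {G : Matrix τ τ R} {c : R} (hc : 0 ≤ c)
    (hG : ∀ i j, |G i j| ≤ c) : |G.det| ≤ (Fintype.card τ * c) ^ Fintype.card τ :=
  calc |G.det| ≤ (Fintype.card τ).factorial • c ^ Fintype.card τ :=
        Matrix.det_le (abv := AbsoluteValue.abs) hG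
    _ ≤ (Fintype.card τ : R) ^ Fintype.card τ * c ^ Fintype.card τ := by
        rw [nsmul_eq_mul]
        gcongr
        exact_mod_cast Nat.factorial_le_pow _
    _ = _ := (mul_pow _ _ _).symm

theorem abs_adjugate_le_card_mul_pow [DecidableEq τ] {G : Matrix τ τ R} {c : R} (hc : 1 ≤ c)
    (hG : ∀ i j, |G i j| ≤ c) (i j : τ) :
    |G.adjugate i j| ≤ (Fintype.card τ * c) ^ Fintype.card τ := by
  have c_nonneg : 0 ≤ c := zero_le_one.trans hc
  rw [Matrix.adjugate_apply]
  refine abs_det_le_card_mul_pow c_nonneg fun k l => ?_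
  rw [Matrix.updateRow_apply, Pi.single_apply]
  split_ifs
  · rwa [abs_one]
  · rwa [abs_zero]
  · exact hG k l

theorem det_transpose_mul_self_ne_zero [Fintype m] [DecidableEq τ] {E : Matrix m τ R}
    (hE : LinearIndependent R E.col) : (Eᵀ * E).det ≠ 0 := by
  intro hdet
  obtain ⟨v, hv, hGv⟩ := Matrix.exists_mulVec_eq_zero_iff.mpr hdet
  have norm_sq_eq_zero : (E *ᵥ v) ⬝ᵥ (E *ᵥ v) = 0 := by
    rw [Matrix.dotProduct_mulVec, Matrix.vecMul_mulVec, ← Matrix.dotProduct_mulVec, hGv,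
      dotProduct_zero]
  refine hv (Matrix.mulVec_injective_iff.mpr hE ?_)
  rw [dotProduct_self_eq_zero.mp norm_sq_eq_zero, Matrix.mulVec_zero]

end OrderedRing

section SupportedVectors

variable {m n R : Type*} [Fintype n]

theorem mulVec_eq_sum_smul_col [CommSemiring R] {A : Matrix m n R} {S : Finset n} {u : n → R}
    (hu : ∀ j ∉ S, u j = 0) : A *ᵥ u = ∑ j ∈ S, u j • A.col j := by
  rw [sum_subset (subset_univ S) fun j _ hj => by rw [hu j hj, zero_smul]]
  ext i
  simp [Matrix.mulVec, dotProduct, mul_comm]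

theorem mulVec_eq_submatrix_mulVec [CommSemiring R] {A : Matrix m n R} {S : Finset n} {u : n → R}
    (hu : ∀ j ∉ S, u j = 0) : A *ᵥ u = A.submatrix id ((↑) : S → n) *ᵥ fun j => u j := by
  rw [mulVec_eq_sum_smul_col hu, mulVec_eq_sum_smul_col (S := univ) (by simp)]
  exact (sum_coe_sort S fun j => u j • A.col j).symm

variable [CommRing R] {A : Matrix m n R} {S : Finset n}

theorem linearIndepOn_col_iff :
    LinearIndepOn R A.col S ↔ ∀ u : n → R, (∀ j ∉ S, u j = 0) → A *ᵥ u = 0 → u = 0 := by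
  classical
  rw [linearIndepOn_finset_iff]
  refine ⟨fun h u hu hAu => funext fun j => ?_, fun h f hf j hj => ?_⟩
  · by_cases hj : j ∈ S
    · exact h u ((mulVec_eq_sum_smul_col hu).symm.trans hAu) j hj
    · exact hu j hj
  · have piecewise_eq_zero := h (S.piecewise f 0) (fun k => S.piecewise_eq_of_notMem f 0) <| by
      rw [mulVec_eq_sum_smul_col fun k => S.piecewise_eq_of_notMem f 0, ← hf]
      exact sum_congr rfl fun k hk => by rw [S.piecewise_eq_of_mem f 0 hk]
    simpa [hj] using congrFun piecewise_eq_zero j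

theorem smul_single_sub_eq_smul_of_mulVec_eq_zero [Fintype m] [DecidableEq n] {a : n} {f : n → R}
    {D : R} {H : Matrix n m R} (hH : ∀ u, (∀ j ∉ S, u j = 0) → H *ᵥ (A *ᵥ u) = D • u)
    (hf : ∀ j ∉ insert a S, f j = 0) (hAf : A *ᵥ f = 0) :
    f a • (Pi.single a D - H *ᵥ A.col a) = D • f := by
  set u : n → R := f - Pi.single a (f a)
  have u_eq_zero : ∀ j ∉ S, u j = 0 := fun j hj => by
    by_cases hja : j = a
    · simp [u, hja]
    · simp [u, hja, hf j (by simp [hja, hj])]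
  have hAu : A *ᵥ u = -(f a • A.col a) := by
    ext i
    simp [u, Matrix.mulVec_sub, hAf, mul_comm]
  have hDu : D • u = -(f a • H *ᵥ A.col a) := by
    rw [← hH u u_eq_zero, hAu, Matrix.mulVec_neg, Matrix.mulVec_smul]
  rw [smul_sub, sub_eq_add_neg, ← hDu, smul_sub]
  simp [← Pi.single_smul, mul_comm]

end SupportedVectors

section SmallKernelVectors

variable {m n τ R : Type*} [Fintype m] [Nonempty m] [Fintype n] [CommRing R] [LinearOrder R]
  [IsStrictOrderedRing R] {A : Matrix m n R} {Δ : R}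

theorem exists_leftInverse_of_linearIndependent_col [Finite τ] [DecidableEq τ] {E : Matrix m τ R}
    (hΔ : 1 ≤ Δ) (hE : ∀ i j, |E i j| ≤ Δ) (hind : LinearIndependent R E.col) :
    ∃ (D : R) (H : Matrix τ m R), D ≠ 0 ∧ |D| ≤ (Fintype.card m * Δ) ^ (2 * Fintype.card m) ∧
      (∀ j i, |H j i| ≤ (Fintype.card m * Δ) ^ (2 * Fintype.card m + 1)) ∧ H * E = D • 1 := by
  have := Fintype.ofFinite τ
  have card_le : Fintype.card τ ≤ Fintype.card m := by simpa using hind.fintype_card_le_finrank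
  have card_le_cast : (Fintype.card τ : R) ≤ Fintype.card m := mod_cast card_le
  have one_le_card : (1 : R) ≤ Fintype.card m := mod_cast Fintype.card_pos
  have : 0 ≤ Δ := zero_le_one.trans hΔ
  have gram_le (i j) : |(Eᵀ * E) i j| ≤ Fintype.card m * (Δ * Δ) :=
    abs_dotProduct_le (fun k => hE k i) (fun k => hE k j) (S := univ) (by simp)
  have one_le_gram : 1 ≤ Fintype.card m * (Δ * Δ) :=
    one_le_mul_of_one_le_of_one_le one_le_card (one_le_mul_of_one_le_of_one_le hΔ hΔ)
  have pow_le : (Fintype.card τ * (Fintype.card m * (Δ * Δ))) ^ Fintype.card τ ≤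
      (Fintype.card m * Δ) ^ (2 * Fintype.card m) :=
    calc _ ≤ (Fintype.card m * (Fintype.card m * (Δ * Δ))) ^ Fintype.card τ := by gcongr
      _ ≤ (Fintype.card m * (Fintype.card m * (Δ * Δ))) ^ Fintype.card m :=
        pow_le_pow_right₀ (one_le_mul_of_one_le_of_one_le one_le_card one_le_gram) card_le
      _ = _ := by rw [pow_mul]; ring
  refine ⟨(Eᵀ * E).det, (Eᵀ * E).adjugate * Eᵀ, det_transpose_mul_self_ne_zero hind,
    (abs_det_le_card_mul_pow (by positivity) gram_le).trans pow_le, fun j i => ?_, ?_⟩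
  · calc |((Eᵀ * E).adjugate * Eᵀ) j i|
        ≤ Fintype.card τ * ((Fintype.card m * Δ) ^ (2 * Fintype.card m) * Δ) :=
          abs_dotProduct_le
            (fun k => (abs_adjugate_le_card_mul_pow one_le_gram gram_le j k).trans pow_le)
            (fun k => hE i k) (S := univ) (by simp)
      _ ≤ Fintype.card m * ((Fintype.card m * Δ) ^ (2 * Fintype.card m) * Δ) := by gcongr
      _ = _ := by ring
  · rw [Matrix.mul_assoc, Matrix.adjugate_mul]

theorem exists_leftInverse_of_linearIndepOn_col {S : Finset n} (hΔ : 1 ≤ Δ)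
    (hA : ∀ i j, |A i j| ≤ Δ) (hS : LinearIndepOn R A.col S) :
    ∃ (D : R) (H : Matrix n m R), D ≠ 0 ∧ |D| ≤ (Fintype.card m * Δ) ^ (2 * Fintype.card m) ∧
      (∀ j i, |H j i| ≤ (Fintype.card m * Δ) ^ (2 * Fintype.card m + 1)) ∧ (∀ j ∉ S, H j = 0) ∧
      ∀ u : n → R, (∀ j ∉ S, u j = 0) → H *ᵥ (A *ᵥ u) = D • u := by
  classical
  have : 0 ≤ Δ := zero_le_one.trans hΔ
  obtain ⟨D, H, hD, D_le, H_le, hHA⟩ := exists_leftInverse_of_linearIndependent_col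
    (E := A.submatrix id ((↑) : S → n)) hΔ (fun i j => hA i j) hS
  refine ⟨D, fun j => if hj : j ∈ S then H ⟨j, hj⟩ else 0, hD, D_le, fun j i => ?_,
    fun j hj => dif_neg hj, fun u hu => ?_⟩
  · beta_reduce
    split_ifs
    · exact H_le _ i
    · rw [Pi.zero_apply, abs_zero]
      positivity
  · have inverse_eq : H *ᵥ (A *ᵥ u) = D • fun j : S => u j := by
      rw [mulVec_eq_submatrix_mulVec hu, Matrix.mulVec_mulVec, hHA, Matrix.smul_mulVec,
        Matrix.one_mulVec]
    ext j
    by_cases hj : j ∈ S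
    · simpa [Matrix.mulVec, hj] using congrFun inverse_eq ⟨j, hj⟩
    · simp [Matrix.mulVec, hj, hu j hj]

theorem exists_small_kernel_vector_of_insert [DecidableEq n] {S : Finset n} {a : n} (hΔ : 1 ≤ Δ)
    (hA : ∀ i j, |A i j| ≤ Δ) (ha : a ∉ S) (hS : LinearIndepOn R A.col S)
    (hdep : ¬ LinearIndepOn R A.col (insert a S : Finset n)) :
    ∃ g : n → R, g ≠ 0 ∧ A *ᵥ g = 0 ∧ (∀ j ∉ insert a S, g j = 0) ∧
      ∀ j, |g j| ≤ (Fintype.card m * Δ) ^ (2 * Fintype.card m + 2) := by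
  have one_le_card_mul : 1 ≤ Fintype.card m * Δ :=
    one_le_mul_of_one_le_of_one_le (mod_cast Fintype.card_pos) hΔ
  obtain ⟨D, H, hD, D_le, H_le, H_eq_zero, hHA⟩ :=
    exists_leftInverse_of_linearIndepOn_col hΔ hA hS
  rw [linearIndepOn_col_iff] at hdep
  push Not at hdep
  obtain ⟨f, f_supp, hAf, hf⟩ := hdep
  have hfa : f a ≠ 0 := fun hfa => hf <| linearIndepOn_col_iff.mp hS f (fun j hj => by
    by_cases hja : j = a
    · rw [hja, hfa]
    · exact f_supp j (by simp [hja, hj])) hAf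
  have w_eq_zero (j) (hj : j ∉ S) : (H *ᵥ A.col a) j = 0 := by
    rw [Matrix.mulVec, H_eq_zero j hj, zero_dotProduct]
  have hg := smul_single_sub_eq_smul_of_mulVec_eq_zero hHA f_supp hAf
  refine ⟨Pi.single a D - H *ᵥ A.col a, fun g_eq_zero => ?_, ?_, fun j hj => ?_, fun j => ?_⟩
  · exact hD (by simpa [w_eq_zero a ha] using congrFun g_eq_zero a)
  · refine (smul_eq_zero.mp ?_).resolve_left hfa
    rw [← Matrix.mulVec_smul, hg, Matrix.mulVec_smul, hAf, smul_zero]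
  · rw [mem_insert, not_or] at hj
    simp [hj.1, w_eq_zero j hj.2]
  · by_cases hja : j = a
    · simpa [hja, w_eq_zero a ha] using
        D_le.trans (pow_le_pow_right₀ one_le_card_mul (Nat.le_add_right _ 2))
    · calc |(Pi.single a D - H *ᵥ A.col a : n → R) j| = |H j ⬝ᵥ A.col a| := by
            simp [hja, Matrix.mulVec]
        _ ≤ Fintype.card m * ((Fintype.card m * Δ) ^ (2 * Fintype.card m + 1) * Δ) :=
          abs_dotProduct_le (H_le j) (fun i => hA i a) (S := univ) (by simp)
        _ = _ := by ring

theorem exists_small_kernel_vector {T : Finset n} (hΔ : 1 ≤ Δ) (hA : ∀ i j, |A i j| ≤ Δ)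
    (hT : ¬ LinearIndepOn R A.col T) :
    ∃ g : n → R, g ≠ 0 ∧ A *ᵥ g = 0 ∧ (∀ j ∉ T, g j = 0) ∧
      ∀ j, |g j| ≤ (Fintype.card m * Δ) ^ (2 * Fintype.card m + 2) := by
  classical
  induction T using Finset.induction_on with
  | empty => exact absurd (by simp) hT
  | insert a S ha ih =>
    by_cases hS : LinearIndepOn R A.col S
    · exact exists_small_kernel_vector_of_insert hΔ hA ha hS hT
    · obtain ⟨g, hg, hAg, g_supp, g_le⟩ := ih hS
      exact ⟨g, hg, hAg, fun j hj => g_supp j (mt mem_insert_of_mem hj), g_le⟩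

end SmallKernelVectors

section MidpointFree

variable {m n : Type*} [Fintype n] {A : Matrix m n ℤ}

theorem abs_le_of_mulVec_eq_zero_of_linearIndepOn_col [Fintype m] [Nonempty m] {Δ β : ℤ}
    {S T : Finset n} {d : n → ℤ} (hΔ : 1 ≤ Δ) (hA : ∀ i j, |A i j| ≤ Δ)
    (hT : LinearIndepOn ℤ A.col T) (hAd : A *ᵥ d = 0) (hS : ∀ j ∉ S, d j = 0) (hβ : 0 ≤ β)
    (hd : ∀ j ∉ T, |d j| ≤ β) {j : n} (hj : j ∈ T) :
    |d j| ≤ (Fintype.card m * Δ) ^ (2 * Fintype.card m + 2) * (#S * β) := by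
  classical
  obtain ⟨D, H, hD, -, H_le, -, hHA⟩ := exists_leftInverse_of_linearIndepOn_col hΔ hA hT
  set u : n → ℤ := T.piecewise d 0
  set r : n → ℤ := T.piecewise 0 d
  have hAu : A *ᵥ u = -(A *ᵥ r) := by
    have add_eq : u + r = d := by ext k; by_cases hk : k ∈ T <;> simp [u, r, hk]
    rw [eq_neg_iff_add_eq_zero, ← Matrix.mulVec_add, add_eq, hAd]
  have r_le (k) : |r k| ≤ β := by
    by_cases hk : k ∈ T
    · simpa [r, hk] using hβ
    · simpa [r, hk] using hd k hk
  have Ar_le (i) : |(A *ᵥ r) i| ≤ #S * (Δ * β) :=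
    abs_dotProduct_le (hA i) r_le fun k hk => by by_cases hkT : k ∈ T <;> simp [r, hkT, hS k hk]
  have hDd : D * d j = -(H *ᵥ (A *ᵥ r)) j := by
    have hDu := congrFun (hHA u fun k hk => by simp [u, hk]) j
    rw [hAu, Matrix.mulVec_neg] at hDu
    simpa [u, hj] using hDu.symm
  calc |d j| ≤ |D| * |d j| := le_mul_of_one_le_left (abs_nonneg _) (Int.one_le_abs hD)
    _ = |(H *ᵥ (A *ᵥ r)) j| := by rw [← abs_mul, hDd, abs_neg]
    _ ≤ Fintype.card m *
          ((Fintype.card m * Δ) ^ (2 * Fintype.card m + 1) * (#S * (Δ * β))) :=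
      abs_dotProduct_le (H_le j) Ar_le (S := univ) (by simp)
    _ = _ := by ring

/-- An integral point `x ≥ 0` is midpoint free if it is not the midpoint of two distinct
nonnegative integral points `x ± g` of its fibre under `A`. Vertices of integer hulls have this
property; natural number coordinates encode `x ≥ 0`. -/
def IsMidpointFree (A : Matrix m n ℤ) (x : n → ℕ) : Prop :=
  ∀ g : n → ℤ, A *ᵥ g = 0 → (∀ j, |g j| ≤ x j) → g = 0

/-- The bound from Cramer's rule on the size of kernel vectors of integral matrices with `M` rows
and entries of absolute value at most `Δ`. -/
def kernelBound (M Δ : ℕ) : ℕ := (M * Δ) ^ (2 * M + 2)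

/-- The size beyond which a coordinate of a midpoint free point is determined by the smaller ones.
The factor `(2 * Δ + 1) ^ M` bounds the size of the support of such a point. -/
def sizeThreshold (M Δ : ℕ) : ℕ := kernelBound M Δ * (2 * (2 * Δ + 1) ^ M * kernelBound M Δ)

theorem kernelBound_le_sizeThreshold {M Δ : ℕ} (hM : 0 < M) (hΔ : 1 ≤ Δ) :
    kernelBound M Δ ≤ sizeThreshold M Δ := by
  have kernelBound_pos : 0 < kernelBound M Δ := pow_pos (Nat.mul_pos hM hΔ) _
  exact Nat.le_mul_of_pos_right _ (by positivity)

namespace IsMidpointFree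

variable {x y : n → ℕ} {Δ : ℕ}

theorem injOn_col (hx : IsMidpointFree A x) : Set.InjOn A.col {j | x j ≠ 0} := by
  classical
  intro j hj k hk hjk
  by_contra hne
  have diff_eq_zero := hx (Pi.single j 1 - Pi.single k 1)
    (by rw [Matrix.mulVec_sub, Matrix.mulVec_single_one, Matrix.mulVec_single_one, hjk, sub_self])
    fun l => by
      by_cases hlj : l = j
      · simpa [hlj, hne] using Nat.one_le_iff_ne_zero.mpr hj
      · by_cases hlk : l = k
        · simpa [hlk, Ne.symm hne] using Nat.one_le_iff_ne_zero.mpr hk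
        · simp [hlj, hlk]
  simpa [hne] using congrFun diff_eq_zero j

variable [Fintype m]

theorem card_support_le (hx : IsMidpointFree A x) (hA : ∀ i j, |A i j| ≤ Δ) :
    #{j | x j ≠ 0} ≤ (2 * Δ + 1) ^ Fintype.card m := by
  classical
  calc #{j | x j ≠ 0} ≤ #(Fintype.piFinset fun _ : m => Icc (-(Δ : ℤ)) Δ) :=
        card_le_card_of_injOn A.col
          (fun j _ => mem_coe.mpr <| Fintype.mem_piFinset.mpr fun i =>
            mem_Icc.mpr (abs_le.mp (hA i j)))
          (by simpa using hx.injOn_col)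
    _ = (2 * Δ + 1) ^ Fintype.card m := by
        rw [Fintype.card_piFinset, prod_const, card_univ, Int.card_Icc]
        congr 1
        lia

variable [Nonempty m]

theorem linearIndepOn_col (hx : IsMidpointFree A x) (hΔ : 1 ≤ Δ) (hA : ∀ i j, |A i j| ≤ Δ) :
    LinearIndepOn ℤ A.col (({j | kernelBound (Fintype.card m) Δ ≤ x j} : Finset n) : Set n) := by
  by_contra hdep
  obtain ⟨g, hg, hAg, g_supp, g_le⟩ := exists_small_kernel_vector (mod_cast hΔ) hA hdep
  refine hg (hx g hAg fun j => ?_)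
  by_cases hj : kernelBound (Fintype.card m) Δ ≤ x j
  · exact (g_le j).trans (mod_cast hj)
  · simp [g_supp j (by simpa using hj)]

theorem abs_sub_le_sizeThreshold (hx : IsMidpointFree A x) (hy : IsMidpointFree A y) (hΔ : 1 ≤ Δ)
    (hA : ∀ i j, |A i j| ≤ Δ) (hxy : A *ᵥ (fun j => (x j : ℤ)) = A *ᵥ fun j => (y j : ℤ))
    (hsmall : ∀ j, x j < kernelBound (Fintype.card m) Δ → |(x j : ℤ) - y j| ≤ x j) {j : n}
    (hj : kernelBound (Fintype.card m) Δ ≤ x j) :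
    |(x j : ℤ) - y j| ≤ sizeThreshold (Fintype.card m) Δ := by
  classical
  set κ := kernelBound (Fintype.card m) Δ with hκ
  set S : Finset n := ({j | x j ≠ 0} : Finset n) ∪ ({j | y j ≠ 0} : Finset n)
  have card_S_le : #S ≤ 2 * (2 * Δ + 1) ^ Fintype.card m := by
    grind [card_union_le, hx.card_support_le hA, hy.card_support_le hA]
  calc |(x j : ℤ) - y j| ≤ (Fintype.card m * Δ) ^ (2 * Fintype.card m + 2) * (#S * κ) := by
        refine abs_le_of_mulVec_eq_zero_of_linearIndepOn_col (d := fun j => (x j : ℤ) - y j)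
          (mod_cast hΔ) hA (hx.linearIndepOn_col hΔ hA) ?_ (fun k hk => ?_) (by positivity)
          (fun k hk => ?_) (by simpa using hj)
        · exact (Matrix.mulVec_sub A _ _).trans (sub_eq_zero.mpr hxy)
        · have : x k = 0 ∧ y k = 0 := by simpa [S] using hk
          simp [this]
        · have hxk : x k < κ := by simpa using hk
          exact (hsmall k hxk).trans (mod_cast hxk.le)
    _ = κ * (#S * κ) := by simp [hκ, kernelBound]
    _ ≤ sizeThreshold (Fintype.card m) Δ := by
        rw [sizeThreshold]
        exact_mod_cast Nat.mul_le_mul_left κ (Nat.mul_le_mul_right κ card_S_le)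

theorem eq_of_abs_sub_le_or_sizeThreshold_le (hx : IsMidpointFree A x) (hy : IsMidpointFree A y)
    (hΔ : 1 ≤ Δ) (hA : ∀ i j, |A i j| ≤ Δ)
    (hxy : A *ᵥ (fun j => (x j : ℤ)) = A *ᵥ fun j => (y j : ℤ))
    (h : ∀ j, |(x j : ℤ) - y j| ≤ x j ∨ sizeThreshold (Fintype.card m) Δ ≤ x j) : x = y := by
  have kernelBound_le := kernelBound_le_sizeThreshold (Fintype.card_pos (α := m)) hΔ
  have diff_eq_zero := hx (fun j => (x j : ℤ) - y j)
    ((Matrix.mulVec_sub A _ _).trans (sub_eq_zero.mpr hxy)) fun j => (h j).elim id fun hj =>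
      (hx.abs_sub_le_sizeThreshold hy hΔ hA hxy (fun k hk => (h k).resolve_right (by lia))
        (kernelBound_le.trans hj)).trans (mod_cast hj)
  exact funext fun j => by exact_mod_cast sub_eq_zero.mp (congrFun diff_eq_zero j)

end IsMidpointFree

end MidpointFree

section Counting

theorem abs_sub_le_of_size_eq {a b : ℕ} (h : a.size = b.size) : |(a : ℤ) - b| ≤ a := by
  rcases hs : a.size with _ | s
  · have ha : a = 0 := Nat.size_eq_zero.mp hs
    have hb : b = 0 := Nat.size_eq_zero.mp (h ▸ hs)
    simp [ha, hb]
  · have le_a : 2 ^ s ≤ a := Nat.lt_size.mp (by lia)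
    have b_lt : b < 2 ^ (s + 1) := Nat.size_le.mp (by lia)
    rw [pow_succ] at b_lt
    rw [abs_le]
    lia

theorem abs_sub_le_or_two_pow_le_of_min_size_eq {a b L : ℕ}
    (h : min a.size (L + 1) = min b.size (L + 1)) : |(a : ℤ) - b| ≤ a ∨ 2 ^ L ≤ a := by
  by_cases hab : a.size = b.size
  · exact .inl (abs_sub_le_of_size_eq hab)
  · exact .inr (Nat.lt_size.mp (by lia))

variable {m n : Type*} [Fintype n] {A : Matrix m n ℤ}

/-- The midpoint free points of the fibre of `A` over `b`, a superset of the vertices of the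
integer hull. -/
def midpointFreePoints (A : Matrix m n ℤ) (b : m → ℤ) : Set (n → ℕ) :=
  {x | A *ᵥ (fun j => (x j : ℤ)) = b ∧ IsMidpointFree A x}

variable [Fintype m] [Nonempty m]

theorem injOn_min_size_midpointFreePoints {Δ L : ℕ} (hΔ : 1 ≤ Δ)
    (hA : ∀ i j, |A i j| ≤ Δ) (hL : sizeThreshold (Fintype.card m) Δ ≤ 2 ^ L) (b : m → ℤ) :
    Set.InjOn (fun (x : n → ℕ) j => min (x j).size (L + 1)) (midpointFreePoints A b) :=
  fun _ ⟨hAx, hx⟩ _ ⟨hAy, hy⟩ hxy =>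
    hx.eq_of_abs_sub_le_or_sizeThreshold_le hy hΔ hA (hAx.trans hAy.symm) fun j =>
      (abs_sub_le_or_two_pow_le_of_min_size_eq (congrFun hxy j)).imp_right hL.trans

theorem finite_midpointFreePoints_and_ncard_le {Δ L : ℕ} (hΔ : 1 ≤ Δ)
    (hA : ∀ i j, |A i j| ≤ Δ) (hL : sizeThreshold (Fintype.card m) Δ ≤ 2 ^ L) (b : m → ℤ) :
    (midpointFreePoints A b).Finite ∧
      (midpointFreePoints A b).ncard ≤ (L + 2) ^ Fintype.card n := by
  classical
  have injOn := injOn_min_size_midpointFreePoints hΔ hA hL b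
  set codes : Finset (n → ℕ) := Fintype.piFinset fun _ => range (L + 2)
  have mapsTo : Set.MapsTo (fun (x : n → ℕ) j => min (x j).size (L + 1))
      (midpointFreePoints A b) codes := fun x _ =>
    mem_coe.mpr <| Fintype.mem_piFinset.mpr fun j => mem_range.mpr (by lia)
  refine ⟨.of_injOn mapsTo injOn codes.finite_toSet, ?_⟩
  calc (midpointFreePoints A b).ncard ≤ (codes : Set (n → ℕ)).ncard :=
        Set.ncard_le_ncard_of_injOn _ mapsTo injOn codes.finite_toSet
    _ = (L + 2) ^ Fintype.card n := by
        rw [Set.ncard_coe_finset, Fintype.card_piFinset, prod_const, card_univ, card_range]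

theorem log_sizeThreshold_le {M Δ : ℕ} (hM : 0 < M) (hΔ : 1 ≤ Δ) :
    Real.log (sizeThreshold M Δ) ≤
      (5 * M + 4) * Real.log (M * Δ) + M * Real.log 3 + Real.log 2 := by
  have hM' : (1 : ℝ) ≤ M := mod_cast hM
  have hΔ' : (1 : ℝ) ≤ Δ := mod_cast hΔ
  have sizeThreshold_le : (sizeThreshold M Δ : ℝ) ≤ (M * Δ) ^ (5 * M + 4) * 3 ^ M * 2 := by
    have : (2 * Δ + 1 : ℝ) ≤ 3 * (M * Δ) := by nlinarith
    calc (sizeThreshold M Δ : ℝ) = (M * Δ) ^ (4 * M + 4) * (2 * Δ + 1) ^ M * 2 := by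
          simp only [sizeThreshold, kernelBound]
          push_cast
          ring
      _ ≤ (M * Δ) ^ (4 * M + 4) * (3 * (M * Δ)) ^ M * 2 := by gcongr
      _ = _ := by ring
  have sizeThreshold_pos : (0 : ℝ) < sizeThreshold M Δ := by
    simp only [sizeThreshold, kernelBound]
    positivity
  calc Real.log (sizeThreshold M Δ) ≤ Real.log ((M * Δ) ^ (5 * M + 4) * 3 ^ M * 2) :=
        Real.log_le_log sizeThreshold_pos sizeThreshold_le
    _ = _ := by
        rw [Real.log_mul (by positivity) two_ne_zero, Real.log_mul (by positivity) (by positivity),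
          Real.log_pow, Real.log_pow]
        push_cast
        rfl

theorem clog_sizeThreshold_add_two_le {M Δ : ℕ} (hM : 0 < M) (hΔ : 1 ≤ Δ) :
    (Nat.clog 2 (sizeThreshold M Δ) + 2 : ℝ) ≤ 14 * M * (Real.log (M * Δ) + 1) := by
  have hM' : (1 : ℝ) ≤ M := mod_cast hM
  have log_nonneg : 0 ≤ Real.log (M * Δ) := Real.log_nonneg (mod_cast Nat.mul_pos hM hΔ)
  have logb_nonneg : 0 ≤ Real.logb 2 (sizeThreshold M Δ) := Real.logb_nonneg one_lt_two <| by
    exact_mod_cast (Nat.one_le_pow _ _ (Nat.mul_pos hM hΔ)).trans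
      (kernelBound_le_sizeThreshold hM hΔ)
  have clog_lt : (Nat.clog 2 (sizeThreshold M Δ) : ℝ) <
      Real.log (sizeThreshold M Δ) / Real.log 2 + 1 := by
    have := Nat.ceil_lt_add_one logb_nonneg
    rwa [← Nat.cast_ofNat, Real.natCeil_logb_natCast] at this
  have log_three_le : Real.log 3 ≤ 2 * Real.log 2 := by
    rw [← Real.log_rpow two_pos]
    exact Real.log_le_log (by norm_num) (by norm_num)
  have log_div_le : Real.log (sizeThreshold M Δ) / Real.log 2 ≤
      14 * M * Real.log (M * Δ) + 2 * M + 1 := by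
    rw [div_le_iff₀ (Real.log_pos one_lt_two)]
    calc Real.log (sizeThreshold M Δ)
        ≤ (5 * M + 4) * Real.log (M * Δ) + M * Real.log 3 + Real.log 2 :=
          log_sizeThreshold_le hM hΔ
      _ ≤ (9 * M) * Real.log (M * Δ) + M * (2 * Real.log 2) + Real.log 2 := by
          gcongr
          linarith
      _ ≤ (14 * Real.log 2 * M) * Real.log (M * Δ) + M * (2 * Real.log 2) + Real.log 2 := by
          gcongr
          linarith [Real.log_two_gt_d9]
      _ = _ := by ring
  linarith

end Counting

section IntegerHull

variable {m n : Type*} [Fintype n] {A : Matrix m n ℤ} {b : m → ℤ}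

/-- The integral points of the polytope `{x | x ≥ 0, A x = b}`. -/
def polytopeIntegralPoints (A : Matrix m n ℤ) (b : m → ℤ) : Set (n → ℝ) :=
  {x | (∀ j, 0 ≤ x j) ∧ (∀ k, ∑ j, (A k j : ℝ) * x j = b k) ∧ ∀ j, ∃ z : ℤ, x j = z}

theorem intCast_mem_polytopeIntegralPoints {z : n → ℤ} :
    (fun j => (z j : ℝ)) ∈ polytopeIntegralPoints A b ↔ (∀ j, 0 ≤ z j) ∧ A *ᵥ z = b := by
  have mulVec_eq_iff : A *ᵥ z = b ↔ ∀ k, ∑ j, (A k j : ℝ) * z j = b k := by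
    simp only [funext_iff, Matrix.mulVec, dotProduct]
    exact forall_congr' fun k => by norm_cast
  simp [polytopeIntegralPoints, mulVec_eq_iff]

theorem exists_natCast_eq_of_mem_polytopeIntegralPoints {x : n → ℝ}
    (hx : x ∈ polytopeIntegralPoints A b) : ∃ z : n → ℕ, x = fun j => (z j : ℝ) := by
  choose z hz using hx.2.2
  have z_nonneg (j) : 0 ≤ z j := by exact_mod_cast hz j ▸ hx.1 j
  lift z to n → ℕ using z_nonneg
  exact ⟨z, funext fun j => mod_cast hz j⟩

theorem extremePoints_convexHull_subset_image_midpointFreePoints :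
    (convexHull ℝ (polytopeIntegralPoints A b)).extremePoints ℝ ⊆
      (fun (z : n → ℕ) j => (z j : ℝ)) '' midpointFreePoints A b := by
  intro x hx
  have x_mem : x ∈ polytopeIntegralPoints A b := extremePoints_convexHull_subset hx
  obtain ⟨z, rfl⟩ := exists_natCast_eq_of_mem_polytopeIntegralPoints x_mem
  have hAz : A *ᵥ (fun j => (z j : ℤ)) = b :=
    (intCast_mem_polytopeIntegralPoints.mp (mod_cast x_mem)).2
  refine ⟨z, ⟨hAz, fun g hAg g_le => ?_⟩, rfl⟩
  have add_mem (h : n → ℤ) (hAh : A *ᵥ h = 0) (h_le : ∀ j, |h j| ≤ z j) :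
      (fun j => (z j + h j : ℝ)) ∈ convexHull ℝ (polytopeIntegralPoints A b) := by
    have sum_mem := (intCast_mem_polytopeIntegralPoints (A := A) (b := b)
      (z := (fun j => (z j : ℤ)) + h)).mpr
      ⟨fun j => neg_le_iff_add_nonneg'.mp (neg_le_of_abs_le (h_le j)),
        by rw [Matrix.mulVec_add, hAz, hAh, add_zero]⟩
    exact subset_convexHull ℝ _ (by simpa using sum_mem)
  have z_add_g_eq := hx.2 (add_mem g hAg g_le)
    (add_mem (-g) (by rw [Matrix.mulVec_neg, hAg, neg_zero]) (by simpa using g_le))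
    ⟨1 / 2, 1 / 2, by norm_num, by norm_num, by norm_num, by
      ext j
      simp only [Pi.add_apply, Pi.smul_apply, Pi.neg_apply, smul_eq_mul, Int.cast_neg]
      ring⟩
  exact funext fun j => by simpa using congrFun z_add_g_eq j

end IntegerHull

theorem abs_le_sup_natAbs {m n : Type*} [Fintype m] [Fintype n] (A : Matrix m n ℤ) (i : m)
    (j : n) : |A i j| ≤ (univ.sup fun q : m × n => (A q.1 q.2).natAbs : ℕ) := by
  rw [Int.abs_eq_natAbs]
  exact_mod_cast le_sup (f := fun q : m × n => (A q.1 q.2).natAbs) (mem_univ (i, j))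

theorem integer_hull_vertex_bound_general {m n : Type*} [Fintype m] [Nonempty m] [Fintype n]
    (A : Matrix m n ℤ) (b : m → ℤ) {Δ : ℕ} (hΔ : 1 ≤ Δ) (hA : ∀ i j, |A i j| ≤ Δ) :
    ((convexHull ℝ (polytopeIntegralPoints A b)).extremePoints ℝ).Finite ∧
      (((convexHull ℝ (polytopeIntegralPoints A b)).extremePoints ℝ).ncard : ℝ) ≤
        (14 * Fintype.card m * (Real.log (Fintype.card m * Δ) + 1)) ^ Fintype.card n := by
  set L := Nat.clog 2 (sizeThreshold (Fintype.card m) Δ)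
  have subset_image := extremePoints_convexHull_subset_image_midpointFreePoints (A := A) (b := b)
  obtain ⟨finite, ncard_le⟩ := finite_midpointFreePoints_and_ncard_le hΔ hA
    (Nat.le_pow_clog one_lt_two _) b
  refine ⟨(finite.image _).subset subset_image, ?_⟩
  calc (((convexHull ℝ (polytopeIntegralPoints A b)).extremePoints ℝ).ncard : ℝ)
      ≤ (L + 2 : ℝ) ^ Fintype.card n := by
        exact_mod_cast (Set.ncard_le_ncard subset_image (finite.image _)).trans
          ((Set.ncard_image_le finite).trans ncard_le)
    _ ≤ _ := by
        gcongr
        exact clog_sizeThreshold_add_two_le Fintype.card_pos hΔ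

theorem integer_hull_vertex_bound :
    ∃ C : ℝ, 0 < C ∧
      ∀ (M N : ℕ), 0 < M → 0 < N →
        ∀ (A : Matrix (Fin M) (Fin N) ℤ) (b : Fin M → ℤ) (Δ : ℕ),
          Δ = Finset.univ.sup (fun q : Fin M × Fin N => (A q.1 q.2).natAbs) →
          1 ≤ Δ →
          (Set.extremePoints ℝ (convexHull ℝ
            {x : Fin N → ℝ | (∀ j, 0 ≤ x j) ∧
              (∀ k, (∑ j, (A k j : ℝ) * x j) = (b k : ℝ)) ∧
              ∀ j, ∃ z : ℤ, x j = (z : ℝ)})).Finite ∧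
          ((Set.extremePoints ℝ (convexHull ℝ
            {x : Fin N → ℝ | (∀ j, 0 ≤ x j) ∧
              (∀ k, (∑ j, (A k j : ℝ) * x j) = (b k : ℝ)) ∧
              ∀ j, ∃ z : ℤ, x j = (z : ℝ)})).ncard : ℝ) ≤
            (N : ℝ) ^ M * (C * (M : ℝ) * (Real.log ((M : ℝ) * (Δ : ℝ)) + 1)) ^ N := by
  refine ⟨14, by norm_num, fun M N hM hN A b Δ hΔ_eq hΔ => ?_⟩
  have := Fin.pos_iff_nonempty.mp hM
  have ⟨finite, ncard_le⟩ :=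
    integer_hull_vertex_bound_general A b hΔ (hΔ_eq ▸ abs_le_sup_natAbs A)
  rw [Fintype.card_fin, Fintype.card_fin] at ncard_le
  exact ⟨finite, ncard_le.trans <| le_mul_of_one_le_left ((Nat.cast_nonneg _).trans ncard_le) <|
    one_le_pow₀ (mod_cast hN)⟩
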